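/- Fix an integer k ≥ 416. Let G be a finite simple graph, L a 10-assignment for G, and α, β two L-colorings of G. Suppose G contains five distinct vertices a, b, c, d, e with ab, bc, cd, de, bd edges of G, d_G(a) = d_G(c) = d_G(e) = 5, and d_G(b) = d_G(d) = 6. Let S = {a, b, c, d, e}. If there exists a k-good recoloring sequence in G − S from the restriction of α to G − S to the restriction of β to G − S, then there exists a k-good recoloring sequence in G from α to β. -/

import Mathlib

def IsLColoring {V : Type} (G : SimpleGraph V) (L : V → Finset ℕ) (φ : V → ℕ) : Prop :=
  (∀ v, φ v ∈ L v) ∧ ∀ ⦃u w : V⦄, G.Adj u w → φ u ≠ φ w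

def recolorCount {V : Type} {m : ℕ} (φ : Fin (m + 1) → V → ℕ) (v : V) : ℕ :=
  (Finset.univ.filter fun i : Fin m => φ i.castSucc v ≠ φ i.succ v).card

def IsRecolSeq {V : Type} (G : SimpleGraph V) (L : V → Finset ℕ) {m : ℕ}
    (φ : Fin (m + 1) → V → ℕ) (α β : V → ℕ) : Prop :=
  φ 0 = α ∧ φ (Fin.last m) = β ∧ (∀ i, IsLColoring G L (φ i)) ∧
    ∀ i : Fin m, ∃! v : V, φ i.castSucc v ≠ φ i.succ v


inductive Reach {V : Type} [DecidableEq V] (G : SimpleGraph V) (L : V → Finset ℕ) :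
    (V → ℕ) → (V → ℕ) → (V → ℕ) → Prop
  | refl (φ : V → ℕ) (h : IsLColoring G L φ) : Reach G L φ φ 0
  | step (φ : V → ℕ) (v : V) (x : ℕ) (ψ n : V → ℕ) (h : IsLColoring G L φ) (hx : x ≠ φ v)
      (hr : Reach G L (Function.update φ v x) ψ n) : Reach G L φ ψ (Pi.single v 1 + n)

section helpers

set_option linter.unusedVariables false
set_option linter.unusedSimpArgs false

set_option linter.unusedSectionVars false

variable {V : Type} [DecidableEq V] {G : SimpleGraph V} {L : V → Finset ℕ}

lemma Reach.left {φ ψ n : V → ℕ} (h : Reach G L φ ψ n) : IsLColoring G L φ := by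
  cases h <;> assumption

lemma Reach.right {φ ψ n : V → ℕ} (h : Reach G L φ ψ n) : IsLColoring G L ψ := by
  induction h <;> assumption

lemma Reach.trans {φ ψ χ n m : V → ℕ} (h : Reach G L φ ψ n) (h2 : Reach G L ψ χ m) :
    Reach G L φ χ (n + m) := by
  induction h with
  | refl φ h => simpa using h2
  | step φ v x ψ n h hx hr ih =>
    rw [add_assoc]
    exact Reach.step φ v x _ _ h hx (ih h2)

lemma IsLColoring.upd {φ : V → ℕ} (h : IsLColoring G L φ) {v : V} {x : ℕ} (hx : x ∈ L v)
    (hn : ∀ u, G.Adj v u → φ u ≠ x) : IsLColoring G L (Function.update φ v x) := by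
  refine ⟨fun u => ?_, fun u w huw => ?_⟩
  · by_cases hu : u = v
    · subst hu; simpa using hx
    · simpa [hu] using h.1 u
  · by_cases hu : u = v
    · subst hu
      have hw : w ≠ u := huw.ne'
      simpa [hw] using (hn w huw).symm
    · by_cases hw : w = v
      · subst hw
        simpa [hu] using hn u huw.symm
      · simpa [hu, hw] using h.2 huw

lemma Reach.single {φ : V → ℕ} (h : IsLColoring G L φ) {v : V} {x : ℕ} (hx : x ∈ L v)
    (hxv : x ≠ φ v) (hn : ∀ u, G.Adj v u → φ u ≠ x) :
    Reach G L φ (Function.update φ v x) (Pi.single v 1) := by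
  have := Reach.step φ v x _ _ h hxv (Reach.refl _ (h.upd hx hn))
  simpa using this

lemma Reach.toSeq {φ ψ n : V → ℕ} (h : Reach G L φ ψ n) :
    ∃ (M : ℕ) (s : Fin (M + 1) → V → ℕ), IsRecolSeq G L s φ ψ ∧ ∀ v, recolorCount s v = n v := by
  induction h with
  | refl φ h =>
    refine ⟨0, fun _ => φ, ⟨rfl, rfl, fun _ => h, fun i => i.elim0⟩, fun v => ?_⟩
    simp [recolorCount]
  | step φ v x ψ n h hx hr ih =>
    obtain ⟨M, s, ⟨h0, h1, h2, h3⟩, hc⟩ := ih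
    refine ⟨M + 1, Fin.cons φ s, ⟨rfl, ?_, ?_, ?_⟩, ?_⟩
    · rw [← Fin.succ_last, Fin.cons_succ, h1]
    · intro i
      refine Fin.cases ?_ (fun i => ?_) i
      · simpa using h
      · simpa using h2 i
    · intro i
      refine Fin.cases ?_ (fun i => ?_) i
      · refine ⟨v, ?_, ?_⟩
        · simpa [h0] using hx.symm
        · intro u hu
          by_contra huv
          apply hu
          simp [h0, huv]
      · simpa [← Fin.succ_castSucc] using h3 i
    · intro u
      unfold recolorCount
      rw [Fin.card_filter_univ_succ]
      have := hc u
      unfold recolorCount at this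
      simp only [Fin.castSucc_zero, Fin.cons_zero, Fin.cons_succ, h0, 
        ← Fin.succ_castSucc, this, Pi.add_apply]
      by_cases huv : u = v
      · subst huv
        simp [hx.symm]; omega
      · simp [huv]

/-- remaining hits from the first occurrence of `x` on -/
def Rm (l : List ℕ) (x : ℕ) : ℕ := (l.dropWhile (fun z => decide (z ≠ x))).length

def Pm (l : List ℕ) (x : ℕ) : ℕ := max (Rm l x) (l.length - 3)

lemma Rm_le (l : List ℕ) (x : ℕ) : Rm l x ≤ l.length :=
  (List.dropWhile_sublist _).length_le

lemma Rm_cons_self (l : List ℕ) (x : ℕ) : Rm (x :: l) x = l.length + 1 := by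
  simp [Rm]

lemma Rm_cons_ne (l : List ℕ) {x y : ℕ} (h : y ≠ x) : Rm (y :: l) x = Rm l x := by
  simp [Rm, h]

lemma exists_good (l : List ℕ) : ∀ (m : ℕ) (X : Finset ℕ), 1 ≤ m → m ≤ X.card →
    ∃ x ∈ X, Rm l x ≤ l.length + 1 - m := by
  induction l with
  | nil =>
    intro m X hm hX
    obtain ⟨x, hx⟩ := Finset.card_pos.mp (by omega : 0 < X.card)
    exact ⟨x, hx, by simp [Rm]⟩
  | cons y l ih =>
    intro m X hm hX
    by_cases h1 : m = 1
    · obtain ⟨x, hx⟩ := Finset.card_pos.mp (by omega : 0 < X.card)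
      refine ⟨x, hx, ?_⟩
      have := Rm_le (y :: l) x
      omega
    · obtain ⟨x, hx, hr⟩ := ih (m - 1) (X.erase y) (by omega) (by
        have := Finset.pred_card_le_card_erase (s := X) (a := y)
        omega)
      rw [Finset.mem_erase] at hx
      refine ⟨x, hx.2, ?_⟩
      rw [Rm_cons_ne _ (Ne.symm hx.1), List.length_cons]
      omega

variable [Fintype V] [DecidableRel G.Adj]

lemma pick {v : V} (hL : (L v).card = 10) (φ : V → ℕ) (I : Finset V)
    (hI : I ⊆ G.neighborFinset v) (m : ℕ) (hm : 1 ≤ m) (h : m + G.degree v + 1 ≤ 10 + I.card)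
    (l : List ℕ) :
    ∃ x ∈ L v, x ≠ φ v ∧ (∀ u, G.Adj v u → u ∉ I → φ u ≠ x) ∧ Rm l x ≤ l.length + 1 - m := by
  have h1 : (G.neighborFinset v \ I).card = G.degree v - I.card := by
    rw [Finset.card_sdiff_of_subset hI, SimpleGraph.card_neighborFinset_eq_degree]
  have h1' : I.card ≤ G.degree v := by
    rw [← SimpleGraph.card_neighborFinset_eq_degree]; exact Finset.card_le_card hI
  have h2 := Finset.card_image_le (s := G.neighborFinset v \ I) (f := φ)
  have h3 := Finset.card_insert_le (φ v) ((G.neighborFinset v \ I).image φ)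
  have h4 := Finset.le_card_sdiff (insert (φ v) ((G.neighborFinset v \ I).image φ)) (L v)
  obtain ⟨x, hx, hr⟩ := exists_good l m
    (L v \ insert (φ v) ((G.neighborFinset v \ I).image φ)) hm (by omega)
  simp only [Finset.mem_sdiff, Finset.mem_insert, Finset.mem_image, not_or, not_exists,
    SimpleGraph.mem_neighborFinset, not_and] at hx
  exact ⟨x, hx.1, hx.2.1, fun u hu hui => hx.2.2 u ⟨hu, hui⟩, hr⟩

lemma bmove (hL : ∀ u, (L u).card = 10) {φ : V → ℕ} (hφ : IsLColoring G L φ) {b c : V}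
    (hbc : G.Adj b c) (hdb : G.degree b = 6) (hdc : G.degree c = 5) (lb lc : List ℕ) (i : ℕ) :
    ∃ φ' n, Reach G L φ φ' n ∧ (∀ u, u ≠ b → u ≠ c → φ' u = φ u ∧ n u = 0) ∧
      φ' b ≠ φ b ∧ φ' c ≠ φ b ∧ n b = 1 ∧
      Rm lb (φ' b) ≤ lb.length + 1 - (if i = 0 then 3 else 4) ∧
      n c + (i - 1) ≤ i ∧ Pm lc (φ' c) ≤ Pm lc (φ c) := by
  have hne : c ≠ b := hbc.ne'
  by_cases hi : i = 0
  · obtain ⟨x, hx, hxb, hn, hr⟩ := pick (G := G) (hL b) φ ∅ (by simp) 3 (by omega) (by simp; omega) lb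
    refine ⟨_, _, Reach.single hφ hx hxb (fun u hu => hn u hu (by simp)), ?_, ?_⟩
    · intro u hu _
      simp [hu]
    · have := hφ.2 hbc
      simp [hne, hi, hxb, this.symm]
      omega
  · obtain ⟨x, hx, hxb, hn, hr⟩ := pick (G := G) (hL b) φ {c} (by simpa using hbc) 4 (by omega)
      (by simp; omega) lb
    by_cases hc : φ c = x
    · obtain ⟨z, hz, hzc, hzn, hzr⟩ := pick (G := G) (hL c) φ ∅ (by simp) 4 (by omega) (by simp; omega) lc
      have h1 := Reach.single hφ hz hzc (fun u hu => hzn u hu (by simp))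
      have h2 := Reach.single (v := b) (x := x) h1.right hx (by simpa [hne.symm] using hxb) (by
        intro u hu
        by_cases huc : u = c
        · subst huc; simp only [Function.update_self]; rw [← hc]; exact hzc
        · simpa [huc] using hn u hu (by simpa using huc))
      refine ⟨_, _, h1.trans h2, ?_, ?_⟩
      · intro u hu huc
        simp [hu, huc]
      · have h5 := hzn b hbc.symm (by simp)
        have : Pm lc z ≤ Pm lc (φ c) := by
          unfold Pm
          omega
        simp [hne, hne.symm, hi, hxb, h5.symm, this]
        omega
    · refine ⟨_, _, Reach.single hφ hx hxb (fun u hu => ?_), ?_, ?_⟩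
      · by_cases huc : u = c
        · subst huc; exact hc
        · exact hn u hu (by simpa using huc)
      · intro u hu _
        simp [hu]
      · have := hφ.2 hbc
        simp [hne, hi, hxb, this.symm]
        omega

def ga (j r : ℕ) : ℕ := j + (r - 5 * j + 3) / 4
def gb (j i p : ℕ) : ℕ := 2 * j + i + (p - 4 * i + 2) / 3

lemma amove (hL : ∀ u, (L u).card = 10) {φ : V → ℕ} (hφ : IsLColoring G L φ) {a b c : V}
    (hab : G.Adj a b) (hbc : G.Adj b c) (hac : a ≠ c)
    (hda : G.degree a = 5) (hdb : G.degree b = 6) (hdc : G.degree c = 5)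
    (la lb lc : List ℕ) (j i : ℕ) :
    ∃ φ' n i', Reach G L φ φ' n ∧ (∀ u, u ≠ a → u ≠ b → u ≠ c → φ' u = φ u ∧ n u = 0) ∧
      φ' a ≠ φ a ∧ n a = 1 ∧
      Rm la (φ' a) ≤ la.length + 1 - (if j = 0 then 4 else 5) ∧
      n b + gb (j - 1) i' (Pm lb (φ' b)) ≤ gb j i (Pm lb (φ b)) ∧
      n c + i' ≤ i ∧ Pm lc (φ' c) ≤ Pm lc (φ c) := by
  have hne : b ≠ a := hab.ne'
  by_cases hj : j = 0
  · obtain ⟨x, hx, hxa, hn, hr⟩ := pick (G := G) (hL a) φ ∅ (by simp) 4 (by omega) (by simp; omega) la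
    refine ⟨_, _, i, Reach.single hφ hx hxa (fun u hu => hn u hu (by simp)), ?_, ?_⟩
    · intro u hu _ _
      simp [hu]
    · simp [hne, hac.symm, hj, hxa]
      omega
  · obtain ⟨x, hx, hxa, hn, hr⟩ := pick (G := G) (hL a) φ {b} (by simpa using hab) 5 (by omega)
      (by simp; omega) la
    by_cases hb : φ b = x
    · obtain ⟨φ1, n1, h1, hoff, hb1, hc1, hnb, hrb, hnc, hpc⟩ :=
        bmove hL hφ hbc hdb hdc lb lc i
      have hoa := hoff a hne.symm hac
      have h2 := Reach.single (v := a) (x := x) h1.right hx (by rw [hoa.1]; exact hxa) (by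
        intro u hu
        by_cases hub : u = b
        · subst hub; rw [← hb]; exact hb1
        · by_cases huc : u = c
          · subst huc; rw [← hb]; exact hc1
          · rw [(hoff u hub huc).1]
            exact hn u hu (by simpa using hub))
      refine ⟨_, _, i - 1, h1.trans h2, ?_, ?_⟩
      · intro u hu hub huc
        simp [hu, hoff u hub huc]
      · have : 1 + gb (j - 1) (i - 1) (Pm lb (φ1 b)) ≤ gb j i (Pm lb (φ b)) := by
          unfold gb Pm
          split_ifs at hrb <;> omega
        simp [hne, hac.symm, hj, hxa, hoa, hnb, this, hnc, hpc]
        omega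
    · refine ⟨_, _, i, Reach.single hφ hx hxa (fun u hu => ?_), ?_, ?_⟩
      · by_cases huc : u = b
        · subst huc; exact hb
        · exact hn u hu (by simpa using huc)
      · intro u hu _ _
        simp [hu]
      · have : gb (j - 1) i (Pm lb (φ b)) ≤ gb j i (Pm lb (φ b)) := by
          unfold gb; omega
        simp [hne, hac.symm, hj, hxa, this]
        omega

/-- colors of the future hits at `v` -/
def hl (G : SimpleGraph V) [DecidableRel G.Adj] (v : V) (l : List (V × ℕ)) : List ℕ :=
  (l.filter (fun m => decide (G.Adj v m.1))).map Prod.snd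

lemma hl_cons_adj {v w : V} (h : G.Adj v w) (y : ℕ) (l : List (V × ℕ)) :
    hl G v ((w, y) :: l) = y :: hl G v l := by simp [hl, h]

lemma hl_cons_nadj {v w : V} (h : ¬ G.Adj v w) (y : ℕ) (l : List (V × ℕ)) :
    hl G v ((w, y) :: l) = hl G v l := by simp [hl, h]

lemma Rm_tail {v w : V} {y x : ℕ} (l : List (V × ℕ)) (h : G.Adj v w → x ≠ y) :
    Rm (hl G v l) x = Rm (hl G v ((w, y) :: l)) x := by
  by_cases hv : G.Adj v w
  · rw [hl_cons_adj hv, Rm_cons_ne _ (h hv).symm]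
  · rw [hl_cons_nadj hv]

lemma hl_len (v w : V) (y : ℕ) (l : List (V × ℕ)) :
    (hl G v l).length ≤ (hl G v ((w, y) :: l)).length := by
  by_cases hv : G.Adj v w
  · rw [hl_cons_adj hv]; simp
  · rw [hl_cons_nadj hv]

lemma Pm_tail {v w : V} {y x : ℕ} (l : List (V × ℕ)) (h : G.Adj v w → x ≠ y) :
    Pm (hl G v l) x ≤ Pm (hl G v ((w, y) :: l)) x := by
  have := hl_len (G := G) v w y l
  unfold Pm
  rw [Rm_tail l h]
  omega

lemma stageA (hL : ∀ u, (L u).card = 10) {φ : V → ℕ} (hφ : IsLColoring G L φ) {a b c : V}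
    (hab : G.Adj a b) (hbc : G.Adj b c) (hac : a ≠ c)
    (hda : G.degree a = 5) (hdb : G.degree b = 6) (hdc : G.degree c = 5)
    (w : V) (y : ℕ) (l : List (V × ℕ)) (lb lc : List ℕ) (j i : ℕ) :
    ∃ φ' n j' i', Reach G L φ φ' n ∧ (∀ u, u ≠ a → u ≠ b → u ≠ c → φ' u = φ u ∧ n u = 0) ∧
      (G.Adj a w → φ' a ≠ y) ∧
      n a + ga j' (Rm (hl G a l) (φ' a)) ≤ ga j (Rm (hl G a ((w, y) :: l)) (φ a)) ∧
      n b + gb j' i' (Pm lb (φ' b)) ≤ gb j i (Pm lb (φ b)) ∧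
      n c + i' ≤ i ∧ Pm lc (φ' c) ≤ Pm lc (φ c) := by
  by_cases h : G.Adj a w ∧ φ a = y
  · obtain ⟨h1, h2⟩ := h
    obtain ⟨φ', n, i', hr, hoff, hne, hna, hra, hb, hc, hp⟩ :=
      amove hL hφ hab hbc hac hda hdb hdc (hl G a l) lb lc j i
    refine ⟨φ', n, j - 1, i', hr, hoff, fun _ => h2 ▸ hne, ?_, hb, hc, hp⟩
    rw [hl_cons_adj h1, h2, Rm_cons_self]
    unfold ga
    split_ifs at hra <;> omega
  · have h' : G.Adj a w → φ a ≠ y := fun h1 h2 => h ⟨h1, h2⟩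
    refine ⟨φ, 0, j, i, Reach.refl _ hφ, by simp, h', ?_, by simp, by simp, le_rfl⟩
    rw [Rm_tail l h']; simp

lemma stageB (hL : ∀ u, (L u).card = 10) {φ : V → ℕ} (hφ : IsLColoring G L φ) {b c : V}
    (hbc : G.Adj b c) (hdb : G.degree b = 6) (hdc : G.degree c = 5)
    (w : V) (y : ℕ) (l : List (V × ℕ)) (lc : List ℕ) (j i : ℕ) :
    ∃ φ' n i', Reach G L φ φ' n ∧ (∀ u, u ≠ b → u ≠ c → φ' u = φ u ∧ n u = 0) ∧
      (G.Adj b w → φ' b ≠ y) ∧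
      n b + gb j i' (Pm (hl G b l) (φ' b)) ≤ gb j i (Pm (hl G b ((w, y) :: l)) (φ b)) ∧
      n c + i' ≤ i ∧ Pm lc (φ' c) ≤ Pm lc (φ c) := by
  by_cases h : G.Adj b w ∧ φ b = y
  · obtain ⟨h1, h2⟩ := h
    obtain ⟨φ', n, hr, hoff, hne, _, hnb, hrb, hc, hp⟩ :=
      bmove hL hφ hbc hdb hdc (hl G b l) lc i
    refine ⟨φ', n, i - 1, hr, hoff, fun _ => h2 ▸ hne, ?_, hc, hp⟩
    rw [hl_cons_adj h1, h2]
    unfold gb Pm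
    rw [Rm_cons_self, List.length_cons]
    split_ifs at hrb <;> omega
  · have h' : G.Adj b w → φ b ≠ y := fun h1 h2 => h ⟨h1, h2⟩
    refine ⟨φ, 0, i, Reach.refl _ hφ, by simp, h', ?_, by simp, le_rfl⟩
    have := Pm_tail l h'
    simp only [Pi.zero_apply]
    unfold gb
    omega

lemma stageC (hL : ∀ u, (L u).card = 10) {φ : V → ℕ} (hφ : IsLColoring G L φ) {c : V}
    (hdc : G.degree c = 5) (w : V) (y : ℕ) (l : List (V × ℕ)) :
    ∃ φ' n, Reach G L φ φ' n ∧ (∀ u, u ≠ c → φ' u = φ u ∧ n u = 0) ∧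
      (G.Adj c w → φ' c ≠ y) ∧
      n c + (Pm (hl G c l) (φ' c) + 3) / 4 ≤ (Pm (hl G c ((w, y) :: l)) (φ c) + 3) / 4 := by
  by_cases h : G.Adj c w ∧ φ c = y
  · obtain ⟨h1, h2⟩ := h
    obtain ⟨x, hx, hxc, hn, hr⟩ := pick (G := G) (hL c) φ ∅ (by simp) 4 (by omega) (by simp; omega)
      (hl G c l)
    refine ⟨_, _, Reach.single hφ hx hxc (fun u hu => hn u hu (by simp)), ?_, ?_, ?_⟩
    · intro u hu
      simp [hu]
    · intro _
      simpa [← h2] using hxc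
    · rw [hl_cons_adj h1, h2]
      unfold Pm
      rw [Rm_cons_self, List.length_cons]
      simp only [Pi.single_eq_same, Function.update_self]
      omega
  · have h' : G.Adj c w → φ c ≠ y := fun h1 h2 => h ⟨h1, h2⟩
    refine ⟨φ, 0, Reach.refl _ hφ, by simp, h', ?_⟩
    have := Pm_tail l h'
    simp only [Pi.zero_apply]
    omega

lemma clean (hL : ∀ u, (L u).card = 10) {φ : V → ℕ} (hφ : IsLColoring G L φ) (v : V) (x : ℕ)
    (T : Finset V) (hT : ∀ u ∈ T, G.degree u ≤ 6) :
    ∃ φ' n, Reach G L φ φ' n ∧ (∀ u, n u ≤ 1) ∧ (∀ u, u ∉ T → φ' u = φ u ∧ n u = 0) ∧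
      (∀ u ∈ T, G.Adj v u → φ' u ≠ x) := by
  induction T using Finset.induction_on with
  | empty => exact ⟨φ, 0, Reach.refl _ hφ, by simp, by simp, by simp⟩
  | insert t T ht ih =>
    obtain ⟨φ1, n1, hr, h1, hoff, hx⟩ := ih (fun u hu => hT u (Finset.mem_insert_of_mem hu))
    have hd := hT t (Finset.mem_insert_self _ _)
    by_cases hc : G.Adj v t ∧ φ1 t = x
    · obtain ⟨z, hz, hzt, hn, -⟩ := pick (G := G) (hL t) φ1 ∅ (by simp) 1 le_rfl
        (by simp; omega) []
      refine ⟨_, _, hr.trans (Reach.single hr.right hz hzt (fun u hu => hn u hu (by simp))),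
        ?_, ?_, ?_⟩
      · intro u
        by_cases hu : u = t
        · subst hu; simp [(hoff u ht).2]
        · simpa [hu] using h1 u
      · intro u hu
        rw [Finset.mem_insert, not_or] at hu
        simpa [hu.1] using hoff u hu.2
      · intro u hu hvu
        by_cases hut : u = t
        · subst hut; simpa [← hc.2] using hzt
        · simpa [hut] using hx u (Finset.mem_of_mem_insert_of_ne hu hut) hvu
    · refine ⟨φ1, n1, hr, h1, fun u hu => hoff u (fun h => hu (Finset.mem_insert_of_mem h)), ?_⟩
      intro u hu hvu
      by_cases hut : u = t
      · subst hut; exact fun h => hc ⟨hvu, h⟩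
      · exact hx u (Finset.mem_of_mem_insert_of_ne hu hut) hvu

lemma finalize (hL : ∀ u, (L u).card = 10) {φ β : V → ℕ} (hφ : IsLColoring G L φ)
    (hβ : IsLColoring G L β) (v : V)
    (U : Finset V) (hU : ∀ u ∈ U, G.degree u ≤ 6) (hv : v ∈ U) (heq : ∀ u, u ∉ U → φ u = β u) :
    ∃ φ' n, Reach G L φ φ' n ∧ (∀ u, n u ≤ 1) ∧ (∀ u, u ∉ U → n u = 0) ∧
      (∀ u, u ∉ U.erase v → φ' u = β u) := by
  obtain ⟨φ1, n1, hr, h1, hoff, hx⟩ := clean hL hφ v (β v) (U.erase v)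
    (fun u hu => hU u (Finset.mem_of_mem_erase hu))
  have hvv := hoff v (by simp)
  have hout : ∀ u, u ∉ U → φ1 u = β u ∧ n1 u = 0 := fun u hu => by
    have := hoff u (fun h => hu (Finset.mem_of_mem_erase h))
    rw [heq u hu] at this
    exact this
  by_cases hc : φ1 v = β v
  · refine ⟨φ1, n1, hr, h1, fun u hu => (hout u hu).2, fun u hu => ?_⟩
    by_cases huv : u = v
    · subst huv; exact hc
    · exact (hout u (fun h => hu (Finset.mem_erase.2 ⟨huv, h⟩))).1
  · refine ⟨_, _, hr.trans (Reach.single (v := v) (x := β v) hr.right (hβ.1 v) (Ne.symm hc) ?_),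
      ?_, ?_, ?_⟩
    · intro u hu
      by_cases huU : u ∈ U
      · exact hx u (Finset.mem_erase.2 ⟨hu.ne', huU⟩) hu
      · rw [(hout u huU).1]; exact (hβ.2 hu).symm
    · intro u
      by_cases huv : u = v
      · subst huv; simp [hvv.2]
      · simpa [huv] using h1 u
    · intro u hu
      have huv : u ≠ v := fun h => hu (h ▸ hv)
      simpa [huv] using (hout u hu).2
    · intro u hu
      by_cases huv : u = v
      · subst huv; simp
      · simpa [huv] using (hout u (fun h => hu (Finset.mem_erase.2 ⟨huv, h⟩))).1

lemma base (hL : ∀ u, (L u).card = 10) {φ β : V → ℕ} (hφ : IsLColoring G L φ)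
    (hβ : IsLColoring G L β) {a b c d e : V} (hnodup : ([a, b, c, d, e] : List V).Nodup)
    (hU : ∀ u ∈ ({a, b, c, d, e} : Finset V), G.degree u ≤ 6)
    (heq : ∀ u, u ∉ ({a, b, c, d, e} : Finset V) → φ u = β u) :
    ∃ n, Reach G L φ β n ∧ (∀ u, u ∉ ({a, b, c, d, e} : Finset V) → n u = 0) ∧
      n a ≤ 1 ∧ n b ≤ 3 ∧ n c ≤ 5 ∧ n d ≤ 4 ∧ n e ≤ 2 := by
  simp only [List.nodup_cons, List.mem_cons, List.not_mem_nil, not_or, or_false] at hnodup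
  obtain ⟨⟨hab, hac, had, hae⟩, ⟨hbc, hbd, hbe⟩, ⟨hcd, hce⟩, hde, -⟩ := hnodup
  set U := ({a, b, c, d, e} : Finset V) with hUdef
  obtain ⟨φ1, n1, r1, l1, z1, q1⟩ := finalize hL hφ hβ a U hU (by simp [hUdef]) heq
  obtain ⟨φ2, n2, r2, l2, z2, q2⟩ := finalize hL r1.right hβ e (U.erase a)
    (fun u hu => hU u (by simp at hu; exact hu.2)) (by simp [hUdef, Ne.symm hae]) q1
  obtain ⟨φ3, n3, r3, l3, z3, q3⟩ := finalize hL r2.right hβ b ((U.erase a).erase e)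
    (fun u hu => hU u (by simp at hu; exact hu.2.2))
    (by simp [hUdef, Ne.symm hab, hbe]) q2
  obtain ⟨φ4, n4, r4, l4, z4, q4⟩ := finalize hL r3.right hβ d (((U.erase a).erase e).erase b)
    (fun u hu => hU u (by simp at hu; exact hu.2.2.2))
    (by simp [hUdef, Ne.symm had, hde, Ne.symm hbd]) q3
  obtain ⟨φ5, n5, r5, l5, z5, q5⟩ := finalize hL r4.right hβ c
    ((((U.erase a).erase e).erase b).erase d)
    (fun u hu => hU u (by simp at hu; exact hu.2.2.2.2))
    (by simp [hUdef, Ne.symm hac, hce, Ne.symm hbc, hcd]) q4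
  have hfin : φ5 = β := by
    funext u
    apply q5
    simp only [hUdef, Finset.mem_erase, Finset.mem_insert, Finset.mem_singleton]
    tauto
  subst hfin
  refine ⟨_, (((r1.trans r2).trans r3).trans r4).trans r5, ?_, ?_, ?_, ?_, ?_, ?_⟩
  · intro u hu
    simp only [Pi.add_apply]
    have := z1 u hu
    have := z2 u (by simp [hu])
    have := z3 u (by simp [hu])
    have := z4 u (by simp [hu])
    have := z5 u (by simp [hu])
    omega
  · simp only [Pi.add_apply]
    have := l1 a
    have := z2 a (by simp)
    have := z3 a (by simp)
    have := z4 a (by simp)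
    have := z5 a (by simp)
    omega
  · simp only [Pi.add_apply]
    have := l1 b
    have := l2 b
    have := l3 b
    have := z4 b (by simp)
    have := z5 b (by simp)
    omega
  · simp only [Pi.add_apply]
    have := l1 c
    have := l2 c
    have := l3 c
    have := l4 c
    have := l5 c
    omega
  · simp only [Pi.add_apply]
    have := l1 d
    have := l2 d
    have := l3 d
    have := l4 d
    have := z5 d (by simp)
    omega
  · simp only [Pi.add_apply]
    have := l1 e
    have := l2 e
    have := z3 e (by simp)
    have := z4 e (by simp)
    have := z5 e (by simp)
    omega

/-- a list of moves outside `U` that is valid in `G - U` and leads to `β` -/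
def Valid (G : SimpleGraph V) (L : V → Finset ℕ) (U : Finset V) (β : V → ℕ) :
    (V → ℕ) → List (V × ℕ) → Prop
  | φ, [] => ∀ u, u ∉ U → φ u = β u
  | φ, (m :: l) => m.1 ∉ U ∧ m.2 ∈ L m.1 ∧ m.2 ≠ φ m.1 ∧
      (∀ u, u ∉ U → G.Adj m.1 u → φ u ≠ m.2) ∧ Valid G L U β (Function.update φ m.1 m.2) l

lemma Valid.congr {U : Finset V} {β : V → ℕ} (l : List (V × ℕ)) : ∀ {φ φ' : V → ℕ},
    (∀ u, u ∉ U → φ' u = φ u) → Valid G L U β φ l → Valid G L U β φ' l := by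
  induction l with
  | nil =>
    intro φ φ' h hv u hu
    rw [h u hu]; exact hv u hu
  | cons m l ih =>
    rintro φ φ' h ⟨h1, h2, h3, h4, h5⟩
    refine ⟨h1, h2, by rw [h _ h1]; exact h3, fun u hu hm => by rw [h u hu]; exact h4 u hu hm,
      ih ?_ h5⟩
    intro u hu
    by_cases hum : u = m.1
    · subst hum; simp
    · simp [hum, h u hu]

/-- number of moves at `u` -/
def cnt (u : V) (l : List (V × ℕ)) : ℕ := l.countP (fun m => decide (m.1 = u))

lemma mainStep (hL : ∀ u, (L u).card = 10) {β : V → ℕ}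
    (hβ : IsLColoring G L β) {a b c d e : V} (hnodup : ([a, b, c, d, e] : List V).Nodup)
    (he1 : G.Adj a b) (he2 : G.Adj b c) (he3 : G.Adj c d) (he4 : G.Adj d e)
    (hda : G.degree a = 5) (hdb : G.degree b = 6) (hdc : G.degree c = 5)
    (hdd : G.degree d = 6) (hde : G.degree e = 5) (l : List (V × ℕ)) :
    ∀ (φ : V → ℕ) (j1 i1 j2 i2 : ℕ), IsLColoring G L φ → Valid G L {a, b, c, d, e} β φ l →
    ∃ n, Reach G L φ β n ∧ (∀ u, u ∉ ({a, b, c, d, e} : Finset V) → n u ≤ cnt u l) ∧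
      n a ≤ 1 + ga j1 (Rm (hl G a l) (φ a)) ∧
      n b ≤ 3 + gb j1 i1 (Pm (hl G b l) (φ b)) ∧
      n c ≤ 5 + i1 + i2 + (Pm (hl G c l) (φ c) + 3) / 4 ∧
      n d ≤ 4 + gb j2 i2 (Pm (hl G d l) (φ d)) ∧
      n e ≤ 2 + ga j2 (Rm (hl G e l) (φ e)) := by
  induction l with
  | nil =>
    intro φ j1 i1 j2 i2 hφ hv
    obtain ⟨n, hr, h0, h1, h2, h3, h4, h5⟩ := base hL hφ hβ hnodup (by
      intro u hu
      simp only [Finset.mem_insert, Finset.mem_singleton] at hu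
      rcases hu with rfl | rfl | rfl | rfl | rfl <;> omega) hv
    refine ⟨n, hr, fun u hu => by rw [h0 u hu]; omega, ?_, ?_, ?_, ?_, ?_⟩ <;> omega
  | cons m l ih =>
    intro φ j1 i1 j2 i2 hφ hv
    obtain ⟨w, y⟩ := m
    have hnd := hnodup
    simp only [List.nodup_cons, List.mem_cons, List.not_mem_nil, not_or, or_false] at hnd
    obtain ⟨⟨hab, hac, had, hae⟩, ⟨hbc, hbd, hbe⟩, ⟨hcd, hce⟩, hde', -⟩ := hnd
    obtain ⟨hw, hy, hyw, hadj, hv'⟩ := hv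
    simp only at hw hy hyw hadj hv'
    obtain ⟨φ1, n1, j1', i1', r1, o1, y1, a1, b1, c1, p1⟩ := stageA hL hφ he1 he2 hac hda hdb hdc
      w y l (hl G b ((w, y) :: l)) (hl G c ((w, y) :: l)) j1 i1
    obtain ⟨φ2, n2, j2', i2', r2, o2, y2, a2, b2, c2, p2⟩ := stageA hL r1.right he4.symm he3.symm
      (Ne.symm hce) hde hdd hdc w y l (hl G d ((w, y) :: l)) (hl G c ((w, y) :: l)) j2 i2
    obtain ⟨φ3, n3, i1'', r3, o3, y3, b3, c3, p3⟩ := stageB hL r2.right he2 hdb hdc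
      w y l (hl G c ((w, y) :: l)) j1' i1'
    obtain ⟨φ4, n4, i2'', r4, o4, y4, b4, c4, p4⟩ := stageB hL r3.right he3.symm hdd hdc
      w y l (hl G c ((w, y) :: l)) j2' i2'
    obtain ⟨φ5, n5, r5, o5, y5, p5⟩ := stageC hL r4.right hdc w y l
    have hout : ∀ u, u ∉ ({a, b, c, d, e} : Finset V) →
        φ5 u = φ u ∧ n1 u + n2 u + n3 u + n4 u + n5 u = 0 := by
      intro u hu
      simp only [Finset.mem_insert, Finset.mem_singleton, not_or] at hu
      obtain ⟨ua, ub, uc, ud, ue⟩ := hu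
      have := o1 u ua ub uc
      have := o2 u ue ud uc
      have := o3 u ub uc
      have := o4 u ud uc
      have := o5 u uc
      constructor <;> omega
    -- values on the five vertices
    have A2 := o2 a hae had hac
    have A3 := o3 a hab hac
    have A4 := o4 a had hac
    have A5 := o5 a hac
    have E1 := o1 e (Ne.symm hae) (Ne.symm hbe) (Ne.symm hce)
    have E3 := o3 e (Ne.symm hbe) (Ne.symm hce)
    have E4 := o4 e (Ne.symm hde') (Ne.symm hce)
    have E5 := o5 e (Ne.symm hce)
    have B2 := o2 b hbe hbd hbc
    have B4 := o4 b hbd hbc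
    have B5 := o5 b hbc
    have D1 := o1 d (Ne.symm had) (Ne.symm hbd) (Ne.symm hcd)
    have D3 := o3 d (Ne.symm hbd) (Ne.symm hcd)
    have D5 := o5 d (Ne.symm hcd)
    have hwall : ∀ u, G.Adj w u → φ5 u ≠ y := by
      intro u hu
      by_cases huS : u ∈ ({a, b, c, d, e} : Finset V)
      · simp only [Finset.mem_insert, Finset.mem_singleton] at huS
        rcases huS with rfl | rfl | rfl | rfl | rfl
        · have := y1 hu.symm; omega
        · have := y3 hu.symm; omega
        · exact y5 hu.symm
        · have := y4 hu.symm; omega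
        · have := y2 hu.symm; omega
      · rw [(hout u huS).1]; exact hadj u huS hu
    have r6 := Reach.single (v := w) (x := y) r5.right hy (by rw [(hout w hw).1]; exact hyw) hwall
    obtain ⟨n, rn, g0, ga', gb', gc', gd', ge'⟩ := ih (Function.update φ5 w y) j1' i1'' j2' i2''
      r6.right (Valid.congr l (by
        intro u hu
        by_cases huw : u = w
        · subst huw; simp
        · simp [huw, (hout u hu).1]) hv')
    simp only [Finset.mem_insert, Finset.mem_singleton, not_or] at hw
    obtain ⟨wa, wb, wc, wd, we⟩ := hw
    rw [Function.update_of_ne (Ne.symm wa), A5.1, A4.1, A3.1, A2.1] at ga'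
    rw [Function.update_of_ne (Ne.symm wb), B5.1, B4.1] at gb'
    rw [Function.update_of_ne (Ne.symm wc)] at gc'
    rw [Function.update_of_ne (Ne.symm wd), D5.1] at gd'
    rw [Function.update_of_ne (Ne.symm we), E5.1, E4.1, E3.1] at ge'
    rw [E1.1] at a2
    rw [D1.1] at b2
    rw [B2.1] at b3
    rw [D3.1] at b4
    refine ⟨_, (((((r1.trans r2).trans r3).trans r4).trans r5).trans r6).trans rn,
      ?_, ?_, ?_, ?_, ?_, ?_⟩
    · intro u hu
      have h1 := (hout u hu).2
      have h2 := g0 u hu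
      simp only [Pi.add_apply, cnt, List.countP_cons] at h2 ⊢
      by_cases huw : u = w
      · subst huw; simp; omega
      · simp [huw]; omega
    · simp only [Pi.add_apply, Pi.single_eq_of_ne (Ne.symm wa)]; omega
    · simp only [Pi.add_apply, Pi.single_eq_of_ne (Ne.symm wb)]; omega
    · simp only [Pi.add_apply, Pi.single_eq_of_ne (Ne.symm wc)]; omega
    · simp only [Pi.add_apply, Pi.single_eq_of_ne (Ne.symm wd)]; omega
    · simp only [Pi.add_apply, Pi.single_eq_of_ne (Ne.symm we)]; omega

lemma countP_le_sum (p : V × ℕ → Bool) (T : Finset V) (l : List (V × ℕ))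
    (h : ∀ m ∈ l, p m = true → m.1 ∈ T) : l.countP p ≤ ∑ u ∈ T, cnt u l := by
  induction l with
  | nil => simp
  | cons m l ih =>
    have := ih (fun m hm => h m (List.mem_cons_of_mem _ hm))
    simp only [cnt, List.countP_cons, Finset.sum_add_distrib] at this ⊢
    by_cases hp : p m = true
    · have hm := h m (by simp) hp
      simp [hp, hm]; omega
    · simp [hp]; omega

lemma Valid.mem {U : Finset V} {β : V → ℕ} (l : List (V × ℕ)) : ∀ {φ : V → ℕ},
    Valid G L U β φ l → ∀ m ∈ l, m.1 ∉ U := by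
  induction l with
  | nil => simp
  | cons m l ih =>
    rintro φ ⟨h1, -, -, -, h5⟩ m' hm'
    rcases List.mem_cons.1 hm' with rfl | h
    · exact h1
    · exact ih h5 m' h

lemma hits_le {U : Finset V} {β φ : V → ℕ} {l : List (V × ℕ)} (hv : Valid G L U β φ l) (k : ℕ)
    (hk : ∀ u, u ∉ U → cnt u l ≤ k) (v : V) (I : Finset V) (hI : I ⊆ U)
    (hIv : I ⊆ G.neighborFinset v) :
    (hl G v l).length ≤ (G.degree v - I.card) * k := by
  have h1 : (hl G v l).length = l.countP (fun m => decide (G.Adj v m.1)) := by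
    simp [hl, List.countP_eq_length_filter]
  rw [h1]
  refine (countP_le_sum _ (G.neighborFinset v \ U) l ?_).trans ?_
  · intro m hm hp
    simp at hp
    simp [hp, Valid.mem l hv m hm]
  · calc ∑ u ∈ G.neighborFinset v \ U, cnt u l ≤ (G.neighborFinset v \ U).card * k := by
          rw [← smul_eq_mul]
          apply Finset.sum_le_card_nsmul
          intro u hu
          exact hk u (Finset.mem_sdiff.1 hu).2
      _ ≤ (G.neighborFinset v \ I).card * k := by
          gcongr
      _ = _ := by
          rw [Finset.card_sdiff_of_subset hIv, SimpleGraph.card_neighborFinset_eq_degree]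

lemma ofSeq {S : Set V} {U : Finset V} (hSU : ∀ u, u ∈ S ↔ u ∈ U) (β : V → ℕ) (m : ℕ) :
    ∀ (φ : V → ℕ) (s : Fin (m + 1) → ↥(Sᶜ) → ℕ) (α' : ↥(Sᶜ) → ℕ), (∀ u, α' u = φ u.1) →
    IsRecolSeq (G.induce Sᶜ) (fun u => L u.1) s α' (fun u => β u.1) →
    ∃ l, Valid G L U β φ l ∧ ∀ u : ↥(Sᶜ), cnt u.1 l = recolorCount s u := by
  induction m with
  | zero =>
    rintro φ s α' hα ⟨h0, h1, h2, h3⟩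
    refine ⟨[], ?_, ?_⟩
    · intro u hu
      have hu' : u ∈ Sᶜ := fun h => hu ((hSU u).1 h)
      have h01 : α' = fun u => β u.1 := by rw [← h0, ← h1]; rfl
      have := congrFun h01 ⟨u, hu'⟩
      rw [hα] at this
      exact this
    · intro u; simp [cnt, recolorCount]
  | succ m ih =>
    rintro φ s α' hα ⟨h0, h1, h2, h3⟩
    obtain ⟨v, hv, huniq⟩ := h3 0
    have hv1 : s 1 v ≠ φ v.1 := by
      rw [← hα, ← h0]
      exact Ne.symm hv
    have hrest : ∀ u, u ≠ v → s 1 u = φ u.1 := by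
      intro u hu
      rw [← hα, ← h0]
      by_contra hne
      exact hu (huniq u (Ne.symm hne))
    obtain ⟨l, hl1, hl2⟩ := ih (Function.update φ v.1 (s 1 v)) (fun i => s i.succ) (s 1)
      (by
        intro u
        by_cases hu : u = v
        · subst hu; simp
        · have : u.1 ≠ v.1 := fun h => hu (Subtype.ext h)
          simp [this, hrest u hu])
      ⟨rfl, by rw [← h1]; rfl, fun i => h2 _, fun i => by
        have := h3 i.succ
        rw [← Fin.succ_castSucc] at this
        exact this⟩
    refine ⟨(v.1, s 1 v) :: l, ⟨fun h => v.2 ((hSU _).2 h), (h2 1).1 v, hv1, ?_, hl1⟩, ?_⟩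
    · intro u hu hadj
      have hu' : u ∈ Sᶜ := fun h => hu ((hSU u).1 h)
      have hne : (⟨u, hu'⟩ : ↥(Sᶜ)) ≠ v := fun h => hadj.ne' (congrArg Subtype.val h)
      have := hrest _ hne
      simp only at this
      rw [← this]
      exact ((h2 1).2 (show (G.induce Sᶜ).Adj v ⟨u, hu'⟩ from hadj)).symm
    · intro u
      have h4 := hl2 u
      unfold recolorCount at h4 ⊢
      rw [Fin.card_filter_univ_succ]
      simp only [cnt, List.countP_cons] at h4 ⊢
      rw [h4]
      by_cases hu : u = v
      · subst hu
        rw [if_pos (by simp), if_pos hv]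
        simp only [Fin.succ_castSucc]
      · have h5 : v.1 ≠ u.1 := fun h => hu (Subtype.ext h.symm)
        rw [if_neg (by simpa using h5), if_neg (fun h => hu (huniq u h))]
        simp only [Fin.succ_castSucc, add_zero]

end helpers

/-- configuration RC(h): if `G` contains this configuration and `G − S` has a
`k`-good recoloring sequence between the restrictions of `α` and `β` (`k ≥ 416`),
then `G` has a `k`-good recoloring sequence from `α` to `β`. -/
theorem stmt_9 {V : Type} [Fintype V] [DecidableEq V]
    (G : SimpleGraph V) [DecidableRel G.Adj]
    (k : ℕ) (hk : 416 ≤ k)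
    (L : V → Finset ℕ) (hL : ∀ u, (L u).card = 10)
    (α β : V → ℕ) (hα : IsLColoring G L α) (hβ : IsLColoring G L β)
    (a b c d e : V) (hnodup : ([a, b, c, d, e] : List V).Nodup)
    (he1: G.Adj a b)
    (he2: G.Adj b c)
    (he3: G.Adj c d)
    (he4: G.Adj d e)
    (he5: G.Adj b d)
    (hda : G.degree a = 5)
    (hdb : G.degree b = 6)
    (hdc : G.degree c = 5)
    (hdd : G.degree d = 6)
    (hde : G.degree e = 5)
    (S : Set V) (hS : S = {a, b, c, d, e})
    (hrec : ∃ (m : ℕ) (φ : Fin (m + 1) → ↥(Sᶜ) → ℕ),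
      IsRecolSeq (G.induce Sᶜ) (fun u => L u.1) φ (fun u => α u.1) (fun u => β u.1) ∧
      ∀ u : ↥(Sᶜ), recolorCount φ u ≤ k) :
    ∃ (M : ℕ) (ψ : Fin (M + 1) → V → ℕ),
      IsRecolSeq G L ψ α β ∧ ∀ u : V, recolorCount ψ u ≤ k := by
  obtain ⟨m, s, hs, hcount⟩ := hrec
  obtain ⟨l, hl1, hl2⟩ := ofSeq (U := {a, b, c, d, e}) (by intro u; rw [hS]; simp) β m α s _
    (fun _ => rfl) hs
  have hcnt : ∀ u, u ∉ ({a, b, c, d, e} : Finset V) → cnt u l ≤ k := by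
    intro u hu
    have hu' : u ∈ Sᶜ := by
      rw [hS]; simpa using hu
    have := hl2 ⟨u, hu'⟩
    simp only at this
    rw [this]
    exact hcount _
  obtain ⟨n, hr, g0, g1, g2, g3, g4, g5⟩ := mainStep hL hβ hnodup he1 he2 he3 he4 hda hdb hdc hdd
    hde l α 4 35 8 60 hα hl1
  have hnd := hnodup
  simp only [List.nodup_cons, List.mem_cons, List.not_mem_nil, not_or, or_false] at hnd
  obtain ⟨⟨hab, hac, had, hae⟩, ⟨hbc, hbd, hbe⟩, ⟨hcd, hce⟩, hde', -⟩ := hnd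
  have Ha := hits_le hl1 k hcnt a {b} (by simp) (by simpa using he1)
  have He := hits_le hl1 k hcnt e {d} (by simp) (by simpa using he4.symm)
  have Hb := hits_le hl1 k hcnt b {a, c, d} (by intro u; simp; tauto)
    (by intro u; simp; rintro (rfl | rfl | rfl); exacts [he1.symm, he2, he5])
  have Hd := hits_le hl1 k hcnt d {b, c, e} (by intro u; simp; tauto)
    (by intro u; simp; rintro (rfl | rfl | rfl); exacts [he5.symm, he3.symm, he4])
  have Hc := hits_le hl1 k hcnt c {b, d} (by intro u; simp; tauto)
    (by intro u; simp; rintro (rfl | rfl); exacts [he2.symm, he3])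
  rw [Finset.card_singleton, hda] at Ha
  rw [Finset.card_singleton, hde] at He
  rw [Finset.card_eq_three.2 ⟨a, c, d, hac, had, hcd, rfl⟩, hdb] at Hb
  rw [Finset.card_eq_three.2 ⟨b, c, e, hbc, hbe, hce, rfl⟩, hdd] at Hd
  rw [Finset.card_pair hbd, hdc] at Hc
  have Ra := Rm_le (hl G a l) (α a)
  have Rb := Rm_le (hl G b l) (α b)
  have Rc := Rm_le (hl G c l) (α c)
  have Rd := Rm_le (hl G d l) (α d)
  have Re := Rm_le (hl G e l) (α e)
  unfold ga at g1 g5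
  unfold gb Pm at g2 g4
  unfold Pm at g3
  obtain ⟨M, ψ, hψ, hc⟩ := hr.toSeq
  refine ⟨M, ψ, hψ, fun u => ?_⟩
  rw [hc u]
  by_cases hu : u ∈ ({a, b, c, d, e} : Finset V)
  · simp only [Finset.mem_insert, Finset.mem_singleton] at hu
    rcases hu with rfl | rfl | rfl | rfl | rfl <;> omega
  · exact (g0 u hu).trans (hcnt u hu)
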